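/- Let n ≥ 1, let S_n act on ℝ^n by permuting coordinates, and let C = { v ↦ x·v + y𝟙 : x, y ∈ ℝ } ⊆ Aff_{S_n}(ℝ^n, ℝ^n) be the width-1 convolutional layer space, where 𝟙 = (1,…,1)ᵀ. Assume σ : ℝ → ℝ is continuous and not a polynomial, and let d ≥ 2. Then the set of first-coordinate projections { π_1 ∘ F : F ∈ U(C, …, C) } (d copies of C) equals { x ↦ f(x_1) : f ∈ C(ℝ, ℝ) }, which in turn equals C_{ρ_1}(ℝ^n, ℝ) for the equivalence relation ρ_1 = { (α, β) ∈ ℝ^n × ℝ^n : α_1 = β_1 }; moreover, for n ≥ 2 this set is a proper subset of C_{Stab_{S_n}(1)}(ℝ^n, ℝ), the space of continuous real-valued functions on ℝ^n invariant under permutations fixing the first coordinate. -/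

import Mathlib

open scoped BigOperators

noncomputable section EquivUnivPreamble

/-- Point-wise activation: apply `σ` coordinatewise. -/
def act (σ : ℝ → ℝ) {Z : Type} (v : Z → ℝ) : Z → ℝ := fun z => σ (v z)

/-- The action of a group element `g` on a real-valued function `v : Y → ℝ` induced by a
`G`-action on `Y` (the permutation representation `ℝ^Y`): `(g • v) y = v (g⁻¹ • y)`. -/
def pSMul {G Y : Type} [Group G] [MulAction G Y] (g : G) (v : Y → ℝ) : Y → ℝ :=
  fun y => v (g⁻¹ • y)

/-- `G`-equivariance of a map between permutation representations. -/
def Equivariant (G : Type) [Group G] {Y Z : Type} [MulAction G Y] [MulAction G Z]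
    (f : (Y → ℝ) → (Z → ℝ)) : Prop :=
  ∀ (g : G) (v : Y → ℝ), f (pSMul g v) = pSMul g (f v)

/-- A map between permutation representations is affine. -/
def IsAffine {Y Z : Type} (f : (Y → ℝ) → (Z → ℝ)) : Prop :=
  ∃ (φ : (Y → ℝ) →ₗ[ℝ] (Z → ℝ)) (b : Z → ℝ), ∀ v, f v = φ v + b

/-- A layer space: the set of maps `v ↦ ∑ᵢ cᵢ φⁱ(v) + b` where `φ¹, …, φᵏ` are fixed
`G`-equivariant linear maps and the bias `b` ranges over all functions constant on
`G`-orbits (i.e. all `∑ⱼ yⱼ 1_{Xⱼ}` with `Xⱼ` the orbits). -/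
def IsLayerSpace (G : Type) [Group G] {Y Z : Type} [MulAction G Y] [MulAction G Z]
    (M : Set ((Y → ℝ) → (Z → ℝ))) : Prop :=
  ∃ (k : ℕ) (φ : Fin k → ((Y → ℝ) →ₗ[ℝ] (Z → ℝ))),
    (∀ i, Equivariant G (φ i : (Y → ℝ) → (Z → ℝ))) ∧
    M = { f | ∃ (c : Fin k → ℝ) (b : Z → ℝ),
            (∀ (g : G) (z : Z), b (g • z) = b z) ∧
            ∀ v, f v = (∑ i, c i • φ i v) + b }

/-- `M^{k×h}`: the layer space `M` with input multiplicity `k` and output multiplicity `h`,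
`(v₁,…,v_k) ↦ (∑ⱼ f_{1,j}(vⱼ), …, ∑ⱼ f_{h,j}(vⱼ))`, identifying `V ⊗ ℝᵏ` with
`Fin k × Y → ℝ`. -/
def layerPow {Y Z : Type} (M : Set ((Y → ℝ) → (Z → ℝ))) (k h : ℕ) :
    Set ((Fin k × Y → ℝ) → (Fin h × Z → ℝ)) :=
  { F | ∃ f : Fin h → Fin k → ((Y → ℝ) → (Z → ℝ)),
      (∀ i j, f i j ∈ M) ∧
      ∀ (v : Fin k × Y → ℝ) (p : Fin h × Z), F v p = ∑ j, f p.1 j (fun y => v (j, y)) p.2 }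

/-- `M^{1×h}` under the canonical identification `V ⊗ ℝ¹ ≅ V` of the input. -/
def layerPowIn {Y Z : Type} (M : Set ((Y → ℝ) → (Z → ℝ))) (h : ℕ) :
    Set ((Y → ℝ) → (Fin h × Z → ℝ)) :=
  { F | ∃ f : Fin h → ((Y → ℝ) → (Z → ℝ)), (∀ i, f i ∈ M) ∧
      ∀ (v : Y → ℝ) (p : Fin h × Z), F v p = f p.1 v p.2 }

/-- `M^{k×1}` under the canonical identification `W ⊗ ℝ¹ ≅ W` of the output. -/
def layerPowOut {Y Z : Type} (M : Set ((Y → ℝ) → (Z → ℝ))) (k : ℕ) :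
    Set ((Fin k × Y → ℝ) → (Z → ℝ)) :=
  { F | ∃ f : Fin k → ((Y → ℝ) → (Z → ℝ)), (∀ j, f j ∈ M) ∧
      ∀ (v : Fin k × Y → ℝ) (z : Z), F v z = ∑ j, f j (fun y => v (j, y)) z }

/-- Evaluation of a chain of `d+1` layers with the point-wise activation `σ` between
consecutive layers: `φ_d ∘ σ̃ ∘ ⋯ ∘ σ̃ ∘ φ_0`. -/
def chainEval (σ : ℝ → ℝ) : ∀ (d : ℕ) (Y : Fin (d + 2) → Type)
    (φ : ∀ i : Fin (d + 1), (Y i.castSucc → ℝ) → (Y i.succ → ℝ)),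
    (Y 0 → ℝ) → (Y (Fin.last (d + 1)) → ℝ)
  | 0, _, φ => φ 0
  | (d + 1), Y, φ => fun v =>
      φ (Fin.last (d + 1))
        (act σ (chainEval σ d (fun i : Fin (d + 2) => Y i.castSucc)
          (fun i : Fin (d + 1) => φ i.castSucc) v))

/-- The neural space `N(M₀, …, M_d)` of a chain of `d+1` layer spaces. -/
def NeuralSpace (σ : ℝ → ℝ) (d : ℕ) (Y : Fin (d + 2) → Type)
    (M : ∀ i : Fin (d + 1), Set ((Y i.castSucc → ℝ) → (Y i.succ → ℝ))) :
    Set ((Y 0 → ℝ) → (Y (Fin.last (d + 1)) → ℝ)) :=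
  { F | ∃ φ : ∀ i : Fin (d + 1), (Y i.castSucc → ℝ) → (Y i.succ → ℝ),
      (∀ i, φ i ∈ M i) ∧ F = chainEval σ d Y φ }

/-- All networks `N(M₀^{1×k₁}, M₁^{k₁×k₂}, …, M_d^{k_d×k})` for the chain `M₀,…,M_d`, with
arbitrary interior multiplicities and fixed output multiplicity `k` (union over the interior
multiplicities). -/
def WPre (σ : ℝ → ℝ) : ∀ (d : ℕ) (Y : Fin (d + 2) → Type)
    (M : ∀ i : Fin (d + 1), Set ((Y i.castSucc → ℝ) → (Y i.succ → ℝ))) (k : ℕ),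
    Set ((Y 0 → ℝ) → (Fin k × Y (Fin.last (d + 1)) → ℝ))
  | 0, _, M, k => layerPowIn (M 0) k
  | (d + 1), Y, M, k =>
      { F | ∃ (k' : ℕ) (g : (Y 0 → ℝ) → (Fin k' × Y (Fin.last (d + 1)).castSucc → ℝ)),
          g ∈ WPre σ d (fun i : Fin (d + 2) => Y i.castSucc)
                (fun i : Fin (d + 1) => M i.castSucc) k' ∧
          ∃ f ∈ layerPow (M (Fin.last (d + 1))) k' k,
          F = fun v => f (act σ (g v)) }

/-- The network space `N(M₀^{1×k}, M₁^{k×k}, …, M_d^{k×k})`: all multiplicities equal to `k`. -/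
def WFix (σ : ℝ → ℝ) : ∀ (d : ℕ) (Y : Fin (d + 2) → Type)
    (M : ∀ i : Fin (d + 1), Set ((Y i.castSucc → ℝ) → (Y i.succ → ℝ))) (k : ℕ),
    Set ((Y 0 → ℝ) → (Fin k × Y (Fin.last (d + 1)) → ℝ))
  | 0, _, M, k => layerPowIn (M 0) k
  | (d + 1), Y, M, k =>
      { F | ∃ g ∈ WFix σ d (fun i : Fin (d + 2) => Y i.castSucc)
                (fun i : Fin (d + 1) => M i.castSucc) k,
          ∃ f ∈ layerPow (M (Fin.last (d + 1))) k k,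
          F = fun v => f (act σ (g v)) }

/-- Closure in the topology of uniform convergence on compact sets. -/
def UnifClosure {A B : Type} [TopologicalSpace A] [PseudoMetricSpace B]
    (S : Set (A → B)) : Set (A → B) :=
  { F | ∀ K : Set A, IsCompact K → ∀ ε : ℝ, 0 < ε → ∃ g ∈ S, ∀ x ∈ K, dist (F x) (g x) < ε }

/-- Separation relation of a family of functions. -/
def sepRel {A B : Type} (S : Set (A → B)) : Set (A × A) :=
  { p | ∀ f ∈ S, f p.1 = f p.2 }

/-- Entry-wise separation relation at the output entry `z`. -/
def sepRelAt {A Z : Type} (S : Set (A → (Z → ℝ))) (z : Z) : Set (A × A) :=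
  { p | ∀ f ∈ S, f p.1 z = f p.2 z }

/-- `C_ρ(A, B)`: continuous functions respecting the relation `ρ`. -/
def Crho {A B : Type} [TopologicalSpace A] [TopologicalSpace B] (ρ : Set (A × A)) :
    Set (A → B) :=
  { f | Continuous f ∧ ∀ p ∈ ρ, f p.1 = f p.2 }

/-- `C_ρ̄(A, ℝ^Z)` for a family of entry-wise relations `ρ̄ = (ρ_z)_{z ∈ Z}`. -/
def CrhoEntryRel {A Z : Type} [TopologicalSpace A] (ρ : Z → Set (A × A)) :
    Set (A → (Z → ℝ)) :=
  { f | Continuous f ∧ ∀ (z : Z), ∀ p ∈ ρ z, f p.1 z = f p.2 z }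

/-- `σ` is not a polynomial function. -/
def NotPolynomial (σ : ℝ → ℝ) : Prop :=
  ¬ ∃ p : Polynomial ℝ, ∀ x : ℝ, σ x = Polynomial.eval x p

/-- `c+1` widened copies of the layer space `M ⊆ Aff_G(ℝ^Z, ℝ^Z)`, from input multiplicity
`kin` to output multiplicity `kout` (union over interior multiplicities). -/
def WRep (σ : ℝ → ℝ) {Z : Type} (M : Set ((Z → ℝ) → (Z → ℝ))) :
    ∀ (_c kin kout : ℕ), Set ((Fin kin × Z → ℝ) → (Fin kout × Z → ℝ))
  | 0, kin, kout => layerPow M kin kout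
  | (c + 1), kin, kout =>
      { F | ∃ k, ∃ g ∈ WRep σ M c kin k, ∃ f ∈ layerPow M k kout,
          F = fun v => f (act σ (g v)) }

/-- `c+1` widened copies of `M`, starting at input multiplicity `kin` and ending with
output multiplicity `1` (canonically identified with `ℝ^Z`). -/
def WRepOut (σ : ℝ → ℝ) {Z : Type} (M : Set ((Z → ℝ) → (Z → ℝ))) :
    ∀ (_c kin : ℕ), Set ((Fin kin × Z → ℝ) → (Z → ℝ))
  | 0, kin => layerPowOut M kin
  | (c + 1), kin =>
      { F | ∃ k, ∃ g ∈ WRep σ M c kin k, ∃ f ∈ layerPowOut M k,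
          F = fun v => f (act σ (g v)) }

/-- `c+1` widened copies of `M`, with input multiplicity `1` (identified with `ℝ^Z`) and
output multiplicity `k`. -/
def WRepIn (σ : ℝ → ℝ) {Z : Type} (M : Set ((Z → ℝ) → (Z → ℝ))) :
    ∀ (_c k : ℕ), Set ((Z → ℝ) → (Fin k × Z → ℝ))
  | 0, k => layerPowIn M k
  | (c + 1), k =>
      { F | ∃ k', ∃ g ∈ WRepIn σ M c k', ∃ f ∈ layerPow M k' k,
          F = fun v => f (act σ (g v)) }

/-- The universality class `U(M, …, M)` of `c+2` copies of a layer space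
`M ⊆ Aff_G(ℝ^Z, ℝ^Z)`. -/
def UClassRep (σ : ℝ → ℝ) {Z : Type} [Fintype Z] (M : Set ((Z → ℝ) → (Z → ℝ))) (c : ℕ) :
    Set ((Z → ℝ) → (Z → ℝ)) :=
  UnifClosure { F | ∃ k, ∃ g ∈ WRepIn σ M c k, ∃ f ∈ layerPowOut M k,
      F = fun v => f (act σ (g v)) }

/-- The universality class `U(M₀, …, M_d, M, …, M)` of the chain `M₀, …, M_d` followed by
`c+1` copies of `M`. -/
def UClassPreRep (σ : ℝ → ℝ) (d : ℕ) (Y : Fin (d + 2) → Type)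
    [Fintype (Y (Fin.last (d + 1)))]
    (Mpre : ∀ i : Fin (d + 1), Set ((Y i.castSucc → ℝ) → (Y i.succ → ℝ)))
    (M : Set ((Y (Fin.last (d + 1)) → ℝ) → (Y (Fin.last (d + 1)) → ℝ))) (c : ℕ) :
    Set ((Y 0 → ℝ) → (Y (Fin.last (d + 1)) → ℝ)) :=
  UnifClosure { F | ∃ k, ∃ g ∈ WPre σ d Y Mpre k, ∃ f ∈ WRepOut σ M c k,
      F = fun v => f (act σ (g v)) }

/-- The universality class `U(M₀, …, M_d, N)` of the chain `M₀, …, M_d` followed by one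
extra layer space `N`. -/
def UClassApp1 (σ : ℝ → ℝ) (d : ℕ) (Y : Fin (d + 2) → Type)
    (M : ∀ i : Fin (d + 1), Set ((Y i.castSucc → ℝ) → (Y i.succ → ℝ)))
    {Z : Type} [Fintype Z]
    (N : Set ((Y (Fin.last (d + 1)) → ℝ) → (Z → ℝ))) : Set ((Y 0 → ℝ) → (Z → ℝ)) :=
  UnifClosure { F | ∃ k, ∃ g ∈ WPre σ d Y M k, ∃ f ∈ layerPowOut N k,
      F = fun v => f (act σ (g v)) }

/-- The universality class `U(M₀, …, M_d, N₁, N₂)` of the chain `M₀, …, M_d` followed by two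
extra layer spaces `N₁, N₂`. -/
def UClassApp2 (σ : ℝ → ℝ) (d : ℕ) (Y : Fin (d + 2) → Type)
    (M : ∀ i : Fin (d + 1), Set ((Y i.castSucc → ℝ) → (Y i.succ → ℝ)))
    {Z₁ Z₂ : Type} [Fintype Z₂]
    (N₁ : Set ((Y (Fin.last (d + 1)) → ℝ) → (Z₁ → ℝ)))
    (N₂ : Set ((Z₁ → ℝ) → (Z₂ → ℝ))) : Set ((Y 0 → ℝ) → (Z₂ → ℝ)) :=
  UnifClosure { F | ∃ k₁, ∃ g ∈ WPre σ d Y M k₁, ∃ k₂, ∃ m ∈ layerPow N₁ k₁ k₂,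
      ∃ f ∈ layerPowOut N₂ k₂, F = fun v => f (act σ (m (act σ (g v)))) }

/-- The universality class `U(M₁, M₂, M₃)` of three layer spaces on a common space `ℝ^Z`. -/
def UClass3 (σ : ℝ → ℝ) {Z : Type} [Fintype Z] (M₁ M₂ M₃ : Set ((Z → ℝ) → (Z → ℝ))) :
    Set ((Z → ℝ) → (Z → ℝ)) :=
  UnifClosure { F | ∃ k₁ k₂, ∃ g ∈ layerPowIn M₁ k₁, ∃ m ∈ layerPow M₂ k₁ k₂,
      ∃ f ∈ layerPowOut M₃ k₂, F = fun v => f (act σ (m (act σ (g v)))) }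

/-- The invariant layer space `I = Aff_G(ℝ^Y, ℝ)`: all `G`-invariant affine maps, with `ℝ`
realized as the trivial permutation representation `ℝ^{Unit}`. -/
def InvAff (G : Type) [Group G] {Y : Type} [MulAction G Y] :
    Set ((Y → ℝ) → (Unit → ℝ)) :=
  { f | IsAffine f ∧ ∀ (g : G) (v : Y → ℝ), f (pSMul g v) = f v }

/-- The fully connected layer space `L = Aff(ℝ, ℝ)`, with `ℝ` realized as `ℝ^{Unit}`. -/
def Lfull : Set ((Unit → ℝ) → (Unit → ℝ)) :=
  { f | ∃ a b : ℝ, f = fun v _ => a * v () + b }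

/-- The width-1 convolutional layer space `C ⊆ Aff_G(ℝ^X, ℝ^X)`:
`v ↦ a·v + (bias constant on `G`-orbits)`, i.e. `v ↦ a·v + ∑ⱼ yⱼ 1_{Xⱼ}`. -/
def ConvG (G : Type) [Group G] {X : Type} [MulAction G X] : Set ((X → ℝ) → (X → ℝ)) :=
  { f | ∃ (a : ℝ) (b : X → ℝ), (∀ (g : G) (z : X), b (g • z) = b z) ∧
      f = fun v z => a * v z + b z }

/-- The width-1 convolutional layer space for `S_n` acting on `ℝ^n`:
`C = { v ↦ a·v + b𝟙 }`. -/
def ConvC (n : ℕ) : Set ((Fin n → ℝ) → (Fin n → ℝ)) :=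
  { f | ∃ a b : ℝ, f = fun v i => a * v i + b }

/-- The PointNet (DeepSets) layer space for `S_n` acting on `ℝ^n`:
`P = { v ↦ (a·Id + c·𝟙𝟙ᵀ) v + b𝟙 }`. -/
def PointNetP (n : ℕ) : Set ((Fin n → ℝ) → (Fin n → ℝ)) :=
  { f | ∃ a c b : ℝ, f = fun v i => a * v i + c * (∑ j, v j) + b }
end EquivUnivPreamble

/-!
If a continuous functional `l` on `C(X, ℝ)` kills all `σ(w h + b)`, then passing to antiderivatives
of `σ` and differentiating in `w` shows that `b ↦ l (h^m σ(w h + b))` is a polynomial. At `w = 0` it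
is `σ(b) l (h^m)`, and `σ` is not a polynomial, so `l (h^m) = 0`. By Hahn–Banach and
Stone–Weierstrass the span of the `σ(w h + b)` is therefore dense when `h` is injective. With `h`
the identity of `ℝ` this is the density of scalar networks with one hidden layer, and greater depth
follows by induction because affine functions can be approximated at every depth.

A network of width-1 convolutional layers applies a single scalar network to every coordinate, and
`f ↦ (v ↦ (f (v i))_i)` is a closed embedding of `C(ℝ, ℝ)`, so the universality class is its range.
-/

section PolynomialFunctions

open Filter Polynomial
open scoped Topology

theorem derivative_surjective (K : Type*) [Field K] [CharZero K] :
    Function.Surjective (derivative : K[X] → K[X]) := fun p => by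
  induction p using Polynomial.induction_on' with
  | add p q hp hq =>
    obtain ⟨P, rfl⟩ := hp
    obtain ⟨Q, rfl⟩ := hq
    exact ⟨P + Q, derivative_add⟩
  | monomial k a =>
    have hk : (k : K) + 1 ≠ 0 := Nat.cast_add_one_ne_zero k
    exact ⟨monomial (k + 1) (a / (k + 1)), by simp [hk]⟩

theorem degree_lt_succ_of_degree_derivative_lt {K : Type*} [Field K] [CharZero K] {n : ℕ}
    {p : K[X]} (hp : (derivative p).degree < n) : p.degree < (n + 1 : ℕ) := by
  rw [degree_lt_iff_coeff_zero] at hp ⊢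
  rintro (_ | m) hm
  · omega
  · have h := hp m (by omega)
    rw [coeff_derivative] at h
    exact (mul_eq_zero.1 h).resolve_right (Nat.cast_add_one_ne_zero m)

/-- The space of real polynomial functions of degree less than `n`. -/
noncomputable def polyFunLT (n : ℕ) : Submodule ℝ (ℝ → ℝ) :=
  (degreeLT ℝ n).map (LinearMap.pi fun x => leval x)

theorem mem_polyFunLT {n : ℕ} {f : ℝ → ℝ} :
    f ∈ polyFunLT n ↔ ∃ p : ℝ[X], p.degree < n ∧ ∀ x, p.eval x = f x := by
  simp only [polyFunLT, Submodule.mem_map, mem_degreeLT, funext_iff, LinearMap.pi_apply,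
    leval_apply]

theorem isClosed_polyFunLT (n : ℕ) : IsClosed (polyFunLT n : Set (ℝ → ℝ)) := by
  have : FiniteDimensional ℝ (degreeLT ℝ n) := (degreeLTEquiv ℝ n).symm.finiteDimensional
  have : FiniteDimensional ℝ (polyFunLT n) := by unfold polyFunLT; infer_instance
  exact Submodule.closed_of_finiteDimensional _

theorem mem_polyFunLT_succ_of_hasDerivAt {n : ℕ} {f f' : ℝ → ℝ}
    (hf : ∀ x, HasDerivAt f (f' x) x) (hf' : f' ∈ polyFunLT n) : f ∈ polyFunLT (n + 1) := by
  obtain ⟨p, hp, hpf⟩ := mem_polyFunLT.1 hf'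
  obtain ⟨q, rfl⟩ := derivative_surjective ℝ p
  have hd : ∀ x, HasDerivAt (fun y => f y - q.eval y) 0 x := fun x => by
    simpa only [hpf x, sub_self] using (hf x).fun_sub (q.hasDerivAt x)
  have hc : ∀ x, f x - q.eval x = f 0 - q.eval 0 := fun x =>
    is_const_of_deriv_eq_zero (fun y => (hd y).differentiableAt) (fun y => (hd y).deriv) x 0
  refine mem_polyFunLT.2 ⟨q + C (f 0 - q.eval 0),
    degree_lt_succ_of_degree_derivative_lt (by simpa using hp), fun x => ?_⟩
  rw [eval_add, eval_C, ← hc x, add_sub_cancel]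

theorem mem_polyFunLT_of_hasDerivAt_parameter {n : ℕ} {Q : ℝ → ℝ → ℝ} {q : ℝ → ℝ} {w : ℝ}
    (hQ : ∀ w, Q w ∈ polyFunLT n) (hq : ∀ b, HasDerivAt (fun w => Q w b) (q b) w) :
    q ∈ polyFunLT n :=
  (isClosed_polyFunLT n).mem_of_tendsto (f := slope Q w)
    (tendsto_pi_nhds.2 fun b => hasDerivAt_iff_tendsto_slope.1 (hq b))
    (.of_forall fun _ => Submodule.smul_mem _ _ (Submodule.sub_mem _ (hQ _) (hQ _)))

end PolynomialFunctions

section FunctionSpaces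

open Filter
open scoped Topology

theorem exists_dual_eq_zero_and_ne_zero_of_notMem {E : Type*} [AddCommGroup E] [Module ℝ E]
    [TopologicalSpace E] [IsTopologicalAddGroup E] [ContinuousSMul ℝ E] [LocallyConvexSpace ℝ E]
    {V : Submodule ℝ E} (hV : IsClosed (V : Set E)) {x : E} (hx : x ∉ V) :
    ∃ l : StrongDual ℝ E, (∀ v ∈ V, l v = 0) ∧ l x ≠ 0 := by
  obtain ⟨l, u, hlx, hlu⟩ := geometric_hahn_banach_point_closed V.convex hV hx
  have hu : u < 0 := by simpa only [map_zero] using hlu 0 V.zero_mem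
  refine ⟨l, fun v hv => ?_, (hlx.trans hu).ne⟩
  by_contra hne
  have h := hlu ((u / l v) • v) (V.smul_mem _ hv)
  rw [map_smul, smul_eq_mul, div_mul_cancel₀ _ hne] at h
  exact lt_irrefl u h

variable {X : Type*} [TopologicalSpace X]

theorem tendsto_slope_continuousMap_of_hasDerivAt {F F' : ℝ → C(X, ℝ)} {t : ℝ}
    (hF' : ContinuousAt F' t) (h : ∀ s x, HasDerivAt (fun s => F s x) (F' s x) s) :
    Tendsto (slope F t) (𝓝[≠] t) (𝓝 (F' t)) := by
  rw [ContinuousMap.tendsto_iff_forall_isCompact_tendstoUniformlyOn]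
  intro K hK
  rw [Metric.tendstoUniformlyOn_iff]
  intro ε hε
  have hnear : ∀ᶠ s in 𝓝 t, ∀ x ∈ K, dist (F' t x) (F' s x) < ε / 2 :=
    Metric.tendstoUniformlyOn_iff.1
      (ContinuousMap.tendsto_iff_forall_isCompact_tendstoUniformlyOn.1 hF' K hK) _ (half_pos hε)
  obtain ⟨δ, hδ, hball⟩ := Metric.eventually_nhds_iff_ball.1 hnear
  filter_upwards [nhdsWithin_le_nhds (Metric.ball_mem_nhds t hδ), self_mem_nhdsWithin]
    with s hs hst x hx
  have hmean : ‖(F s x - s * F' t x) - (F t x - t * F' t x)‖ ≤ ε / 2 * ‖s - t‖ :=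
    (convex_ball t δ).norm_image_sub_le_of_norm_hasDerivWithin_le
      (f := fun r => F r x - r * F' t x) (f' := fun r => F' r x - 1 * F' t x)
      (fun r _ => ((h r x).sub ((hasDerivAt_id r).mul_const _)).hasDerivWithinAt)
      (fun r hr => by simpa [Real.dist_eq, abs_sub_comm] using (hball r hr x hx).le)
      (Metric.mem_ball_self hδ) hs
  have hst' : s - t ≠ 0 := sub_ne_zero.2 hst
  have hslope : slope F t s x - F' t x
      = ((F s x - s * F' t x) - (F t x - t * F' t x)) / (s - t) := by
    simp only [slope_def_module, ContinuousMap.smul_apply, ContinuousMap.sub_apply, smul_eq_mul]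
    field_simp
    ring
  calc dist (F' t x) (slope F t s x)
      = ‖(F s x - s * F' t x) - (F t x - t * F' t x)‖ / ‖s - t‖ := by
        rw [dist_comm, dist_eq_norm, hslope, norm_div]
    _ ≤ ε / 2 := div_le_of_le_mul₀ (norm_nonneg _) (half_pos hε).le hmean
    _ < ε := half_lt_self hε

theorem hasDerivAt_dual_apply_of_hasDerivAt (l : StrongDual ℝ C(X, ℝ)) {F F' : ℝ → C(X, ℝ)}
    {t : ℝ} (hF' : ContinuousAt F' t)
    (h : ∀ s x, HasDerivAt (fun s => F s x) (F' s x) s) :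
    HasDerivAt (fun s => l (F s)) (l (F' t)) t := by
  have hslope : slope (fun s => l (F s)) t = l ∘ slope F t := by
    ext s
    simp only [slope_def_module, Function.comp_apply, map_smul, map_sub]
  rw [hasDerivAt_iff_tendsto_slope, hslope]
  exact (l.continuous.tendsto _).comp (tendsto_slope_continuousMap_of_hasDerivAt hF' h)

theorem mem_closure_continuousMap_iff {Y : Type*} [PseudoMetricSpace Y] {S : Set C(X, Y)}
    {f : C(X, Y)} : f ∈ closure S ↔
      ∀ K : Set X, IsCompact K → ∀ ε : ℝ, 0 < ε → ∃ g ∈ S, ∀ x ∈ K, dist (f x) (g x) < ε := by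
  rw [mem_closure_iff_nhds_basis
    (nhds_basis_uniformity' Metric.uniformity_basis_dist.compactConvergenceUniformity)]
  simp only [Prod.forall, and_imp, UniformSpace.ball, Set.mem_preimage, Set.mem_ofPred_eq]
  exact ⟨fun H K hK ε hε => H K ε hK hε, fun H K ε hK hε => H K hK ε hε⟩

theorem closure_eq_univ_of_separatesPoints {A : Subalgebra ℝ C(X, ℝ)} (hA : A.SeparatesPoints) :
    closure (A : Set C(X, ℝ)) = Set.univ := by
  refine Set.eq_univ_of_forall fun f => mem_closure_continuousMap_iff.2 fun K hK ε hε => ?_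
  obtain ⟨g, hgA, hg⟩ :=
    ContinuousMap.exists_mem_subalgebra_near_continuous_of_isCompact_of_separatesPoints hA f hK hε
  exact ⟨g, hgA, fun x hx => by simpa only [dist_eq_norm, norm_sub_rev] using hg x hx⟩

end FunctionSpaces

section RidgeFunctions

variable {X : Type*} [TopologicalSpace X] {h : C(X, ℝ)} {τ T : C(ℝ, ℝ)} {m : ℕ}

theorem exists_continuousMap_hasDerivAt (τ : C(ℝ, ℝ)) :
    ∃ T : C(ℝ, ℝ), ∀ t, HasDerivAt T (τ t) t := by
  have hT : ∀ t, HasDerivAt (fun t => ∫ x in (0)..t, τ x) (τ t) t := fun t =>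
    (τ.continuous.integral_hasStrictDerivAt 0 t).hasDerivAt
  exact ⟨⟨_, continuous_iff_continuousAt.2 fun t => (hT t).continuousAt⟩, hT⟩

/-- The ridge function `x ↦ h(x)^m τ(w h(x) + b)` of weight `w` and bias `b`. Those with `m = 0`
are the units of a shallow network with activation `τ` and input `h`, and the factor `h^m` arises
by differentiating in `w`. -/
def ridge (h : C(X, ℝ)) (τ : C(ℝ, ℝ)) (m : ℕ) (w b : ℝ) : C(X, ℝ) :=
  h ^ m * τ.comp (w • h + .const X b)

theorem continuous_ridge (h : C(X, ℝ)) (τ : C(ℝ, ℝ)) (m : ℕ) :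
    Continuous fun p : ℝ × ℝ => ridge h τ m p.1 p.2 :=
  ContinuousMap.continuous_of_continuous_uncurry _ <| by
    simp only [Function.uncurry_def, ridge, ContinuousMap.mul_apply, ContinuousMap.pow_apply,
      ContinuousMap.comp_apply, ContinuousMap.add_apply, ContinuousMap.smul_apply,
      ContinuousMap.const_apply]
    fun_prop

theorem hasDerivAt_dual_ridge_bias (l : StrongDual ℝ C(X, ℝ)) (hT : ∀ t, HasDerivAt T (τ t) t)
    (w b : ℝ) : HasDerivAt (fun b => l (ridge h T m w b)) (l (ridge h τ m w b)) b := by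
  refine hasDerivAt_dual_apply_of_hasDerivAt l (F' := ridge h τ m w)
    ((continuous_ridge h τ m).comp (by fun_prop : Continuous fun b => (w, b))).continuousAt
    fun s x => ?_
  simpa [ridge] using ((hT (w * h x + s)).comp_const_add (w * h x) s).const_mul (h x ^ m)

theorem hasDerivAt_dual_ridge_weight (l : StrongDual ℝ C(X, ℝ)) (hT : ∀ t, HasDerivAt T (τ t) t)
    (w b : ℝ) : HasDerivAt (fun w => l (ridge h T m w b)) (l (ridge h τ (m + 1) w b)) w := by
  refine hasDerivAt_dual_apply_of_hasDerivAt l (F' := fun w => ridge h τ (m + 1) w b)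
    ((continuous_ridge h τ (m + 1)).comp (by fun_prop : Continuous fun w => (w, b))).continuousAt
    fun s x => ?_
  have hlin : HasDerivAt (fun w => w * h x + b) (h x) s := by
    simpa only [one_mul] using ((hasDerivAt_id' s).mul_const (h x)).add_const b
  simpa [ridge, pow_succ, mul_assoc, mul_comm (τ _)] using
    ((hT _).comp s hlin).const_mul (h x ^ m)

-- Passing to an antiderivative of `τ` costs one degree in the bias, and differentiating in the
-- weight then produces one factor `h`.
theorem dual_ridge_mem_polyFunLT {l : StrongDual ℝ C(X, ℝ)} {n : ℕ}
    (hl : ∀ w, (fun b => l (ridge h τ 0 w b)) ∈ polyFunLT n) (m : ℕ) (w : ℝ) :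
    (fun b => l (ridge h τ m w b)) ∈ polyFunLT (n + m) := by
  induction m generalizing n τ w with
  | zero => exact hl w
  | succ m ih =>
    obtain ⟨T, hT⟩ := exists_continuousMap_hasDerivAt τ
    have hlT : ∀ w, (fun b => l (ridge h T m w b)) ∈ polyFunLT (n + 1 + m) :=
      ih fun w => mem_polyFunLT_succ_of_hasDerivAt (hasDerivAt_dual_ridge_bias l hT w) (hl w)
    rw [← Nat.add_assoc, Nat.add_right_comm]
    exact mem_polyFunLT_of_hasDerivAt_parameter hlT fun b => hasDerivAt_dual_ridge_weight l hT w b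

theorem pow_mem_of_ridge_mem {σ : C(ℝ, ℝ)} (hσ : NotPolynomial σ) {V : Submodule ℝ C(X, ℝ)}
    (hV : IsClosed (V : Set C(X, ℝ))) (hridge : ∀ w b, ridge h σ 0 w b ∈ V) (m : ℕ) :
    h ^ m ∈ V := by
  by_contra hm
  obtain ⟨l, hlV, hlm⟩ := exists_dual_eq_zero_and_ne_zero_of_notMem hV hm
  have hzero : ∀ w, (fun b => l (ridge h σ 0 w b)) = 0 := fun w =>
    funext fun b => hlV _ (hridge w b)
  have hpoly : (fun b => l (ridge h σ m 0 b)) ∈ polyFunLT (0 + m) :=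
    dual_ridge_mem_polyFunLT (fun w => hzero w ▸ (polyFunLT 0).zero_mem) m 0
  obtain ⟨p, -, hp⟩ := mem_polyFunLT.1 hpoly
  refine hσ ⟨Polynomial.C (l (h ^ m))⁻¹ * p, fun b => ?_⟩
  have hb : ridge h σ m 0 b = σ b • h ^ m := by
    ext x
    simp [ridge, mul_comm]
  rw [Polynomial.eval_mul, Polynomial.eval_C, hp b, hb, map_smul, smul_eq_mul,
    mul_comm (σ b), inv_mul_cancel_left₀ hlm]

theorem eq_top_of_ridge_mem {σ : C(ℝ, ℝ)} (hσ : NotPolynomial σ) (hh : Function.Injective h)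
    {V : Submodule ℝ C(X, ℝ)} (hV : IsClosed (V : Set C(X, ℝ)))
    (hridge : ∀ w b, ridge h σ 0 w b ∈ V) : V = ⊤ := by
  have hsep : (Algebra.adjoin ℝ {h}).SeparatesPoints := fun x y hxy =>
    ⟨h, ⟨h, Algebra.self_mem_adjoin_singleton ℝ h, rfl⟩, hh.ne hxy⟩
  have hadjoin : (Algebra.adjoin ℝ {h} : Set C(X, ℝ)) ⊆ V := by
    rw [← Subalgebra.coe_toSubmodule, Algebra.adjoin_eq_span, SetLike.coe_subset_coe,
      Submodule.span_le, ← Submonoid.powers_eq_closure]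
    rintro _ ⟨m, rfl⟩
    exact pow_mem_of_ridge_mem hσ hV hridge m
  exact SetLike.coe_injective <| Set.univ_subset_iff.1 <|
    (closure_eq_univ_of_separatesPoints hsep).symm.trans_subset (closure_minimal hadjoin hV)

end RidgeFunctions

section ScalarNetworks

variable {σ : C(ℝ, ℝ)} {c : ℕ}

/-- The scalar networks with activation `σ` and `c` hidden layers. Only the first hidden layer has
biases. -/
def scalarNet (σ : C(ℝ, ℝ)) : ℕ → Submodule ℝ C(ℝ, ℝ)
  | 0 => .span ℝ {.id ℝ, 1}
  | c + 1 => .span ℝ (σ.comp '' scalarNet σ c)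

theorem comp_mem_topologicalClosure_scalarNet {f : C(ℝ, ℝ)}
    (hf : f ∈ (scalarNet σ c).topologicalClosure) :
    σ.comp f ∈ (scalarNet σ (c + 1)).topologicalClosure :=
  map_mem_closure σ.continuous_postcomp hf fun g hg => Submodule.subset_span ⟨g, hg, rfl⟩

theorem topologicalClosure_scalarNet_succ_of_affine_mem (hσ : NotPolynomial σ)
    (haff : ∀ w b : ℝ, w • .id ℝ + .const ℝ b ∈ (scalarNet σ c).topologicalClosure) :
    (scalarNet σ (c + 1)).topologicalClosure = ⊤ := by
  refine eq_top_of_ridge_mem (h := .id ℝ) hσ Function.injective_id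
    (Submodule.isClosed_topologicalClosure _) fun w b => ?_
  rw [ridge, pow_zero, one_mul]
  exact comp_mem_topologicalClosure_scalarNet (haff w b)

theorem affine_mem_topologicalClosure_scalarNet (hσ : NotPolynomial σ) (c : ℕ) (w b : ℝ) :
    w • .id ℝ + .const ℝ b ∈ (scalarNet σ c).topologicalClosure := by
  induction c generalizing w b with
  | zero =>
    refine Submodule.le_topologicalClosure _ (Submodule.mem_span_pair.2 ⟨w, b, ?_⟩)
    ext x
    simp
  | succ c ih =>
    rw [topologicalClosure_scalarNet_succ_of_affine_mem hσ ih]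
    exact Submodule.mem_top

theorem topologicalClosure_scalarNet_succ (hσ : NotPolynomial σ) (c : ℕ) :
    (scalarNet σ (c + 1)).topologicalClosure = ⊤ :=
  topologicalClosure_scalarNet_succ_of_affine_mem hσ (affine_mem_topologicalClosure_scalarNet hσ c)

end ScalarNetworks

section ConvolutionalNetworks

theorem exists_finite_family_of_mem_span {R M ι : Type*} [Semiring R] [AddCommMonoid M]
    [Module R M] [Finite ι] {S : Set M} {x : ι → M} (hx : ∀ i, x i ∈ Submodule.span R S) :
    ∃ (k : ℕ) (s : Fin k → M) (a : ι → Fin k → R),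
      (∀ j, s j ∈ S) ∧ ∀ i, ∑ j, a i j • s j = x i := by
  classical
  obtain ⟨T, hTS, hT⟩ := Submodule.subset_span_finite_of_subset_span
    (t := (Set.finite_range x).toFinset) (s := S) (by simpa [Set.range_subset_iff] using hx)
  have hspan : ∀ i, x i ∈ Submodule.span R (Set.range fun j => (T.equivFin.symm j : M)) := by
    intro i
    rw [← Function.comp_def Subtype.val, T.equivFin.symm.surjective.range_comp, Subtype.range_coe]
    exact hT (by simp)
  choose a ha using fun i => (Submodule.mem_span_range_iff_exists_fun R).1 (hspan i)
  exact ⟨_, _, a, fun j => hTS (T.equivFin.symm j).2, ha⟩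

/-- The map `ℝ^Z → ℝ^k ⊗ ℝ^Z` applying the functions `G 1, …, G k` to every coordinate. -/
def coordwise {k : ℕ} {Z : Type} (G : Fin k → C(ℝ, ℝ)) (v : Z → ℝ) : Fin k × Z → ℝ :=
  fun p => G p.1 (v p.2)

/-- The map applying `f` to every coordinate. -/
def entrywise {Y Z : Type*} [TopologicalSpace Y] [TopologicalSpace Z] (ι : Type*) (f : C(Y, Z)) :
    C(ι → Y, ι → Z) :=
  .piMap fun _ => f

/-- The networks with activation `σ` and `c + 2` widened copies of the convolutional layer space;
`UClassRep σ (ConvC n) c` is by definition their closure. -/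
def convNet (σ : ℝ → ℝ) (n c : ℕ) : Set ((Fin n → ℝ) → (Fin n → ℝ)) :=
  { F | ∃ k, ∃ g ∈ WRepIn σ (ConvC n) c k, ∃ f ∈ layerPowOut (ConvC n) k,
      F = fun v => f (act σ (g v)) }

variable {σ : C(ℝ, ℝ)} {n c k h : ℕ}

theorem exists_mem_layerPow_convC_coordwise (a : Fin h → Fin k → ℝ) (G : Fin k → C(ℝ, ℝ)) :
    ∃ F ∈ layerPow (ConvC n) k h, ∀ v,
      F (coordwise G v) = coordwise (fun i => ∑ j, a i j • G j) v :=
  ⟨fun v p => ∑ j, a p.1 j * v (j, p.2),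
    ⟨fun i j v z => a i j * v z + 0, fun i j => ⟨a i j, 0, rfl⟩, fun v p => by simp⟩,
    fun v => funext fun p => by simp [coordwise]⟩

theorem exists_mem_layerPowOut_convC_entrywise (a : Fin k → ℝ) (G : Fin k → C(ℝ, ℝ)) :
    ∃ F ∈ layerPowOut (ConvC n) k, ∀ v,
      F (coordwise G v) = entrywise (Fin n) (∑ j, a j • G j) v :=
  ⟨fun v z => ∑ j, a j * v (j, z),
    ⟨fun j v z => a j * v z + 0, fun j => ⟨a j, 0, rfl⟩, fun v z => by simp⟩,
    fun v => funext fun z => by simp [coordwise, entrywise]⟩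

theorem exists_coordwise_of_mem_layerPow_convC {F : (Fin k × Fin n → ℝ) → (Fin h × Fin n → ℝ)}
    (hF : F ∈ layerPow (ConvC n) k h) (G : Fin k → C(ℝ, ℝ)) :
    ∃ G' : Fin h → C(ℝ, ℝ), ∀ v, F (coordwise G v) = coordwise G' v := by
  obtain ⟨f, hf, hF⟩ := hF
  choose a b hab using hf
  exact ⟨fun i => ∑ j, (a i j • G j + .const ℝ (b i j)),
    fun v => funext fun p => by simp [hF, hab, coordwise]⟩

theorem exists_entrywise_of_mem_layerPowOut_convC {F : (Fin k × Fin n → ℝ) → (Fin n → ℝ)}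
    (hF : F ∈ layerPowOut (ConvC n) k) (G : Fin k → C(ℝ, ℝ)) :
    ∃ f : C(ℝ, ℝ), ∀ v, F (coordwise G v) = entrywise (Fin n) f v := by
  obtain ⟨f, hf, hF⟩ := hF
  choose a b hab using hf
  exact ⟨∑ j, (a j • G j + .const ℝ (b j)),
    fun v => funext fun z => by simp [hF, hab, coordwise, entrywise]⟩

theorem coordwise_mem_wRepIn_convC {G : Fin k → C(ℝ, ℝ)} (hG : ∀ j, G j ∈ scalarNet σ c) :
    coordwise G ∈ WRepIn σ (ConvC n) c k := by
  induction c generalizing k with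
  | zero =>
    choose a b hab using fun j => Submodule.mem_span_pair.1 (hG j)
    exact ⟨fun j v z => a j * v z + b j, fun j => ⟨a j, b j, rfl⟩,
      fun v p => by simp [coordwise, ← hab]⟩
  | succ c ih =>
    obtain ⟨k', s, a, hs, ha⟩ := exists_finite_family_of_mem_span hG
    choose g hg hgs using hs
    obtain ⟨F, hF, hFg⟩ := exists_mem_layerPow_convC_coordwise (n := n) a s
    obtain rfl : σ.comp ∘ g = s := funext hgs
    obtain rfl : (fun i => ∑ j, a i j • σ.comp (g j)) = G := funext ha
    exact ⟨k', coordwise g, ih hg, F, hF, funext fun v => (hFg v).symm⟩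

theorem entrywise_mem_convNet {f : C(ℝ, ℝ)} (hf : f ∈ scalarNet σ (c + 1)) :
    ⇑(entrywise (Fin n) f) ∈ convNet σ n c := by
  obtain ⟨k, s, a, hs, ha⟩ := exists_finite_family_of_mem_span fun _ : Unit => hf
  choose g hg hgs using hs
  obtain ⟨F, hF, hFg⟩ := exists_mem_layerPowOut_convC_entrywise (n := n) (a ()) s
  obtain rfl : σ.comp ∘ g = s := funext hgs
  rw [← ha ()]
  exact ⟨k, coordwise g, coordwise_mem_wRepIn_convC hg, F, hF, funext fun v => (hFg v).symm⟩

theorem exists_eq_coordwise_of_mem_wRepIn_convC {g : (Fin n → ℝ) → (Fin k × Fin n → ℝ)}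
    (hg : g ∈ WRepIn σ (ConvC n) c k) : ∃ G : Fin k → C(ℝ, ℝ), g = coordwise G := by
  induction c generalizing k with
  | zero =>
    obtain ⟨f, hf, hg⟩ := hg
    choose a b hab using hf
    exact ⟨fun j => a j • .id ℝ + .const ℝ (b j),
      funext fun v => funext fun p => by simp [hg, hab, coordwise]⟩
  | succ c ih =>
    obtain ⟨k', g', hg', F, hF, rfl⟩ := hg
    obtain ⟨G, rfl⟩ := ih hg'
    obtain ⟨G', hG'⟩ := exists_coordwise_of_mem_layerPow_convC hF fun j => σ.comp (G j)
    exact ⟨G', funext hG'⟩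

theorem exists_eq_entrywise_of_mem_convNet {F : (Fin n → ℝ) → (Fin n → ℝ)}
    (hF : F ∈ convNet σ n c) : ∃ f : C(ℝ, ℝ), F = entrywise (Fin n) f := by
  obtain ⟨k, g, hg, F', hF', rfl⟩ := hF
  obtain ⟨G, rfl⟩ := exists_eq_coordwise_of_mem_wRepIn_convC hg
  obtain ⟨f, hf⟩ := exists_entrywise_of_mem_layerPowOut_convC hF' fun j => σ.comp (G j)
  exact ⟨f, funext hf⟩

end ConvolutionalNetworks

section UniversalityClass

open Topology

theorem isClosedEmbedding_entrywise {Y Z : Type*} [TopologicalSpace Y] [TopologicalSpace Z]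
    [LocallyCompactPair Y Z] [T2Space Z] (ι : Type*) [Nonempty ι] :
    IsClosedEmbedding (entrywise ι : C(Y, Z) → C(ι → Y, ι → Z)) := by
  let i : ι := Classical.arbitrary ι
  let diag : C(Y, ι → Y) := ⟨fun t _ => t, by fun_prop⟩
  let restrict : C(ι → Y, ι → Z) → C(Y, Z) := fun F =>
    ContinuousMap.comp ⟨fun v => v i, by fun_prop⟩ (F.comp diag)
  refine Function.LeftInverse.isClosedEmbedding (f := restrict) (g := entrywise ι)
    (fun _ => rfl) ?_ ?_
  · exact (ContinuousMap.continuous_postcomp _).comp diag.continuous_precomp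
  · refine ContinuousMap.continuous_of_continuous_uncurry _ (continuous_pi fun j => ?_)
    exact ContinuousEval.continuous_eval.comp (g := fun p : C(Y, Z) × Y => p.1 p.2)
      (f := fun p : C(Y, Z) × (ι → Y) => (p.1, p.2 j)) (by fun_prop)

variable {A B : Type} [TopologicalSpace A] [PseudoMetricSpace B]

theorem unifClosure_mono {S T : Set (A → B)} (hST : S ⊆ T) : UnifClosure S ⊆ UnifClosure T :=
  fun _ hF K hK ε hε => (hF K hK ε hε).imp fun _ hg => ⟨hST hg.1, hg.2⟩

theorem continuous_of_mem_unifClosure [WeaklyLocallyCompactSpace A] {S : Set (A → B)}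
    (hS : ∀ g ∈ S, Continuous g) {F : A → B} (hF : F ∈ UnifClosure S) : Continuous F := by
  refine continuous_of_locally_uniform_approx_of_continuousAt fun a u hu => ?_
  obtain ⟨ε, hε, hεu⟩ := Metric.mem_uniformity_dist.1 hu
  obtain ⟨K, hK, hKa⟩ := exists_compact_mem_nhds a
  obtain ⟨g, hg, hFg⟩ := hF K hK ε hε
  exact ⟨K, hKa, g, (hS g hg).continuousAt, fun y hy => hεu (hFg y hy)⟩

theorem unifClosure_image_coe [WeaklyLocallyCompactSpace A] (S : Set C(A, B)) :
    UnifClosure ((⇑) '' S) = (⇑) '' closure S := by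
  have hmem : ∀ f : C(A, B), ⇑f ∈ UnifClosure ((⇑) '' S) ↔ f ∈ closure S := fun f => by
    simp only [UnifClosure, mem_closure_continuousMap_iff, Set.exists_mem_image, Set.mem_ofPred_eq]
  refine Set.Subset.antisymm (fun F hF => ?_) (Set.image_subset_iff.2 fun f => (hmem f).2)
  have hFc : Continuous F :=
    continuous_of_mem_unifClosure (Set.forall_mem_image.2 fun g _ => g.continuous) hF
  exact ⟨⟨F, hFc⟩, (hmem _).1 hF, rfl⟩

theorem uClassRep_convC_eq_image_range_entrywise {σ : C(ℝ, ℝ)} (hσ : NotPolynomial σ) (n : ℕ)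
    [NeZero n] (c : ℕ) :
    UClassRep σ (ConvC n) c = (⇑) '' Set.range (entrywise (Fin n) : C(ℝ, ℝ) → _) := by
  let Φ : C(ℝ, ℝ) → C(Fin n → ℝ, Fin n → ℝ) := entrywise (Fin n)
  have hΦ : IsClosedEmbedding Φ := isClosedEmbedding_entrywise _
  have hnet : convNet σ n c ⊆ (⇑) '' Set.range Φ := fun F hF => by
    obtain ⟨f, rfl⟩ := exists_eq_entrywise_of_mem_convNet hF
    exact ⟨_, ⟨f, rfl⟩, rfl⟩
  have hscalar : (⇑) '' (Φ '' scalarNet σ (c + 1)) ⊆ convNet σ n c :=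
    Set.forall_mem_image.2 <| Set.forall_mem_image.2 fun _ => entrywise_mem_convNet
  have hdense : closure (Φ '' scalarNet σ (c + 1)) = Set.range Φ := by
    rw [hΦ.closure_image_eq, ← Submodule.topologicalClosure_coe,
      topologicalClosure_scalarNet_succ hσ, Submodule.top_coe, Set.image_univ]
  refine Set.Subset.antisymm ((unifClosure_mono hnet).trans_eq ?_)
    (Eq.trans_subset ?_ (unifClosure_mono hscalar))
  · rw [unifClosure_image_coe, hΦ.isClosed_range.closure_eq]
  · rw [unifClosure_image_coe, hdense]

end UniversalityClass

section FirstCoordinate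

theorem setOf_comp_eq_crho {A B C : Type} [TopologicalSpace A] [TopologicalSpace B]
    [TopologicalSpace C] {q : C(A, B)} (hq : Topology.IsQuotientMap q) :
    { h : A → C | ∃ f : B → C, Continuous f ∧ h = fun a => f (q a) } =
      Crho { p : A × A | q p.1 = q p.2 } := by
  ext h
  constructor
  · rintro ⟨f, hf, rfl⟩
    exact ⟨hf.comp hq.continuous, fun p (hp : q p.1 = q p.2) => congrArg f hp⟩
  · rintro ⟨hc, hh⟩
    have hfac : Function.FactorsThrough (⟨h, hc⟩ : C(A, C)) q :=
      fun {a a'} (haa' : q a = q a') => hh (a, a') haa'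
    exact ⟨hq.lift _ hfac, (hq.lift _ hfac).continuous,
      congrArg DFunLike.coe (hq.lift_comp _ hfac).symm⟩

theorem setOf_comp_eval_ssubset_stabilizer_invariant {ι : Type*} [Finite ι] [Nontrivial ι]
    (i : ι) :
    { h : (ι → ℝ) → ℝ | ∃ f : ℝ → ℝ, Continuous f ∧ h = fun v => f (v i) } ⊂
      { h : (ι → ℝ) → ℝ | Continuous h ∧ ∀ g : Equiv.Perm ι, g i = i →
        ∀ v : ι → ℝ, h (fun j => v (g⁻¹ j)) = h v } := by
  classical
  have := Fintype.ofFinite ι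
  rw [Set.ssubset_iff_of_subset]
  · refine ⟨fun v => ∑ j, v j, ⟨by fun_prop, fun g _ v => Equiv.sum_comp g⁻¹ v⟩, ?_⟩
    rintro ⟨f, -, hf⟩
    obtain ⟨j, hj⟩ := exists_ne i
    have hsum : ∑ k, (Pi.single j (1 : ℝ) : ι → ℝ) k = ∑ k : ι, (0 : ι → ℝ) k := by
      rw [congrFun hf (Pi.single j 1), congrFun hf 0, Pi.single_eq_of_ne hj.symm, Pi.zero_apply]
    simp at hsum
  · rintro _ ⟨f, hf, rfl⟩
    exact ⟨by fun_prop, fun g hg v => by simp only [Equiv.Perm.inv_eq_iff_eq.2 hg.symm]⟩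

end FirstCoordinate

/-- entry-wise characterization for width-1 CNNs: for `d ≥ 2`, the set
of first-coordinate projections of `U(C, …, C)` (`d` copies) equals
`{ x ↦ f(x₁) : f ∈ C(ℝ, ℝ) }`, which equals `C_{ρ₁}(ℝ^n, ℝ)` for the relation
`ρ₁ = { (α, β) : α₁ = β₁ }`; moreover for `n ≥ 2` it is a proper subset of
`C_{Stab_{S_n}(1)}(ℝ^n, ℝ)`, the continuous functions invariant under permutations fixing
the first coordinate. -/
theorem conv_first_coordinate_projections
    (n : ℕ) (hn : 1 ≤ n) (σ : ℝ → ℝ) (hσc : Continuous σ) (hσp : NotPolynomial σ)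
    (d : ℕ) (hd : 2 ≤ d) :
    ((fun (F : (Fin n → ℝ) → (Fin n → ℝ)) => fun v => F v ⟨0, hn⟩) ''
          UClassRep σ (ConvC n) (d - 2)
        = { h : (Fin n → ℝ) → ℝ |
            ∃ f : ℝ → ℝ, Continuous f ∧ h = fun v => f (v ⟨0, hn⟩) }) ∧
    ((fun (F : (Fin n → ℝ) → (Fin n → ℝ)) => fun v => F v ⟨0, hn⟩) ''
          UClassRep σ (ConvC n) (d - 2)
        = Crho { p : (Fin n → ℝ) × (Fin n → ℝ) | p.1 ⟨0, hn⟩ = p.2 ⟨0, hn⟩ }) ∧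
    (2 ≤ n →
      (fun (F : (Fin n → ℝ) → (Fin n → ℝ)) => fun v => F v ⟨0, hn⟩) ''
          UClassRep σ (ConvC n) (d - 2)
        ⊂ { h : (Fin n → ℝ) → ℝ | Continuous h ∧
            ∀ gp : Equiv.Perm (Fin n), gp ⟨0, hn⟩ = ⟨0, hn⟩ →
              ∀ v : Fin n → ℝ, h (fun i => v (gp⁻¹ i)) = h v }) := by
  lift σ to C(ℝ, ℝ) using hσc
  have : NeZero n := ⟨Nat.one_le_iff_ne_zero.1 hn⟩
  let i : Fin n := ⟨0, hn⟩
  have hproj : (fun (F : (Fin n → ℝ) → (Fin n → ℝ)) => fun v => F v i) ''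
      UClassRep σ (ConvC n) (d - 2) = { h | ∃ f, Continuous f ∧ h = fun v => f (v i) } := by
    rw [uClassRep_convC_eq_image_range_entrywise hσp, Set.image_image, ← Set.range_comp]
    exact Set.ext fun h => ⟨fun ⟨f, hf⟩ => ⟨f, f.continuous, hf.symm⟩,
      fun ⟨f, hf, hh⟩ => ⟨⟨f, hf⟩, hh.symm⟩⟩
  have heval : Topology.IsQuotientMap (ContinuousMap.eval i : C(Fin n → ℝ, ℝ)) :=
    (isOpenMap_eval i).isQuotientMap (continuous_apply i) (Function.surjective_eval i)
  refine ⟨hproj, hproj.trans (setOf_comp_eq_crho heval), fun h2 => ?_⟩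
  have : Nontrivial (Fin n) := Fin.nontrivial_iff_two_le.2 h2
  exact hproj.trans_ssubset (setOf_comp_eval_ssubset_stabilizer_invariant i)
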